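/- Let g be a continuous complex-valued function on the closed unit disk and ψ ∈ L¹(𝕋) bounded. If f : 𝔻 → ℂ satisfies f(z) = P_ψ(z) − G_g(z) for all z ∈ 𝔻, then at the origin |f_z(0)| + |f_{z̄}(0)| ≤ (4/π)‖P_ψ‖_∞ + (2/3)‖g‖_∞. -/

import Mathlib

open Metric MeasureTheory Set Filter

noncomputable section

/-- The Wirtinger derivative `∂f/∂z = (f_x - i f_y)/2`. -/
def wdz (f : ℂ → ℂ) (z : ℂ) : ℂ :=
  (fderiv ℝ f z 1 - Complex.I * fderiv ℝ f z Complex.I) / 2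

/-- The Wirtinger derivative `∂f/∂z̄ = (f_x + i f_y)/2`. -/
def wdzbar (f : ℂ → ℂ) (z : ℂ) : ℂ :=
  (fderiv ℝ f z 1 + Complex.I * fderiv ℝ f z Complex.I) / 2

/-- The Laplacian `Δf = f_xx + f_yy` (equivalently `4 f_{z z̄}`). -/
def lap (f : ℂ → ℂ) (z : ℂ) : ℂ :=
  fderiv ℝ (fun w => fderiv ℝ f w 1) z 1 +
    fderiv ℝ (fun w => fderiv ℝ f w Complex.I) z Complex.I

/-- The Poisson integral `P_ψ(z) = (1/2π) ∫₀^{2π} ((1-|z|²)/|1-z e^{-it}|²) ψ(e^{it}) dt`. -/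
def poissonIntegral (ψ : ℂ → ℂ) (z : ℂ) : ℂ :=
  (1 / (2 * Real.pi) : ℝ) • ∫ t in (0:ℝ)..(2 * Real.pi),
    (((1 - ‖z‖ ^ 2) / ‖1 - z * Complex.exp (-(Complex.I * (t : ℂ)))‖ ^ 2 : ℝ) : ℂ) *
      ψ (Complex.exp (Complex.I * (t : ℂ)))

/-- The Green potential `G_g(z) = (1/2π) ∫_𝔻 log|(1 - z w̄)/(z - w)| g(w) dA(w)`. -/
def greenPotential (g : ℂ → ℂ) (z : ℂ) : ℂ :=
  (1 / (2 * Real.pi) : ℝ) • ∫ w in ball (0:ℂ) 1,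
    ((Real.log ‖(1 - z * (starRingEnd ℂ) w) / (z - w)‖ : ℝ) : ℂ) * g w

/-- `sup_{z ∈ 𝔻} |g(z)|`. -/
def supD (g : ℂ → ℂ) : ℝ := sSup ((fun z => ‖g z‖) '' ball (0:ℂ) 1)

/-- The function `μ(r)` with constant `c` in place of `‖g‖_∞`. -/
def mu (c r : ℝ) : ℝ :=
  c * (1 - r ^ 2) / (8 * r ^ 2) *
    ((1 + r ^ 2) / (1 - r ^ 2) - (1 - r ^ 2) / (2 * r) * Real.log ((1 + r) / (1 - r)))

/-!
The Poisson integral is `A + conj B` with `A`, `B` holomorphic. On a circle about the origin, the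
quantity `e * A' + conj (e * B')` is an average of `A + conj B` against the kernel
`2 * Re (e / ζ)`. For the unimodular `e` that aligns the two terms its modulus is `|A'| + |B'|`, and
the mean value `2 / π` of `|cos|` produces the constant `4 / π`.

The Green potential is differentiated at the origin under the integral sign. Its gradient kernel is
`w⁻¹ - conj w`, of `L¹` norm `4 * π / 3` on the disk, which gives the constant `2 / 3`. The Taylor
remainder of the kernel is singular at `0` and at `z`, but it is at most a multiple of
`|z| ^ p * (|w| ^ (-p) + |w - z| ^ (-p))` for every `1 ≤ p ≤ 2`. An exponent strictly between `1`
and `2` makes this both `o(|z|)` and integrable.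
-/

open scoped ComplexConjugate Topology

section Wirtinger

/-- The real-linear map `h ↦ a * h + b * conj h`. It encodes a real differential by its Wirtinger
derivatives `a = ∂f/∂z` and `b = ∂f/∂z̄`. -/
def wirtingerMap (a b : ℂ) : ℂ →L[ℝ] ℂ :=
  ContinuousLinearMap.mul ℝ ℂ a +
    (ContinuousLinearMap.mul ℝ ℂ b).comp (Complex.conjCLE : ℂ →L[ℝ] ℂ)

lemma wirtingerMap_apply (a b h : ℂ) : wirtingerMap a b h = a * h + b * conj h := by
  simp [wirtingerMap]

lemma wirtingerMap_sub (a b a' b' : ℂ) :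
    wirtingerMap a b - wirtingerMap a' b' = wirtingerMap (a - a') (b - b') := by
  ext h
  simp only [sub_apply, wirtingerMap_apply]
  ring

variable {f : ℂ → ℂ} {a b z : ℂ}

lemma wdz_eq_of_hasFDerivAt (hf : HasFDerivAt f (wirtingerMap a b) z) : wdz f z = a := by
  rw [wdz, hf.fderiv, wirtingerMap_apply, wirtingerMap_apply, map_one, Complex.conj_I]
  linear_combination (b - a) / 2 * Complex.I_sq

lemma wdzbar_eq_of_hasFDerivAt (hf : HasFDerivAt f (wirtingerMap a b) z) : wdzbar f z = b := by
  rw [wdzbar, hf.fderiv, wirtingerMap_apply, wirtingerMap_apply, map_one, Complex.conj_I]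
  linear_combination (a - b) / 2 * Complex.I_sq

lemma hasFDerivAt_add_conj {A B : ℂ → ℂ} (hA : HasDerivAt A a z) (hB : HasDerivAt B b z) :
    HasFDerivAt (fun w ↦ A w + conj (B w)) (wirtingerMap a (conj b)) z := by
  have hconjB : HasFDerivAt (fun w ↦ conj (B w)) _ z :=
    (Complex.conjCLE : ℂ →L[ℝ] ℂ).hasFDerivAt.comp z (hB.hasFDerivAt.restrictScalars ℝ)
  refine ((hA.hasFDerivAt.restrictScalars ℝ).add hconjB).congr_fderiv ?_
  ext
  simp [wirtingerMap_apply, mul_comm]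

end Wirtinger

lemma exists_norm_eq_one_norm_mul_add_conj_mul_eq (a b : ℂ) :
    ∃ e : ℂ, ‖e‖ = 1 ∧ ‖e * a + conj (e * b)‖ = ‖a‖ + ‖b‖ := by
  set θ : ℝ := (a.arg - b.arg) / 2
  set e := Complex.exp ((-(a.arg + b.arg) / 2 : ℝ) * Complex.I)
  have rotate_a : e * a = ‖a‖ * Complex.exp (θ * Complex.I) := by
    conv_lhs => rw [← Complex.norm_mul_exp_arg_mul_I a]
    rw [mul_left_comm, ← Complex.exp_add]
    congr 2; push_cast [θ]; ring
  have rotate_b : conj (e * b) = ‖b‖ * Complex.exp (θ * Complex.I) := by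
    conv_lhs => rw [← Complex.norm_mul_exp_arg_mul_I b]
    rw [mul_left_comm, ← Complex.exp_add, map_mul, Complex.conj_ofReal, ← Complex.exp_conj]
    rw [← add_mul, ← Complex.ofReal_add, map_mul, Complex.conj_ofReal, Complex.conj_I]
    congr 2; push_cast [θ]; ring
  refine ⟨e, Complex.norm_exp_ofReal_mul_I _, ?_⟩
  rw [rotate_a, rotate_b, ← add_mul, norm_mul, Complex.norm_exp_ofReal_mul_I, mul_one,
    ← Complex.ofReal_add, Complex.norm_of_nonneg (by positivity)]

section HarmonicSchwarz

lemma integral_abs_cos_add_pi (a : ℝ) : ∫ t in a..(a + Real.pi), |Real.cos t| = 2 := by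
  have periodic_abs_cos : Function.Periodic (fun t ↦ |Real.cos t|) Real.pi := fun t ↦ by
    simp only [Real.cos_add_pi, abs_neg]
  calc ∫ t in a..(a + Real.pi), |Real.cos t|
    _ = ∫ t in -(Real.pi / 2)..Real.pi / 2, |Real.cos t| := by
      rw [periodic_abs_cos.intervalIntegral_add_eq a (-(Real.pi / 2))]
      congr 1; ring
    _ = ∫ t in -(Real.pi / 2)..Real.pi / 2, Real.cos t := by
      refine intervalIntegral.integral_congr fun t ht ↦ abs_of_nonneg ?_
      rw [uIcc_of_le (by linarith [Real.pi_pos])] at ht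
      exact Real.cos_nonneg_of_mem_Icc ht
    _ = 2 := by norm_num [integral_cos]

lemma integral_abs_cos_sub (α : ℝ) : ∫ t in (0 : ℝ)..2 * Real.pi, |Real.cos (α - t)| = 4 := by
  have intervalIntegrable (a b : ℝ) : IntervalIntegrable (fun t ↦ |Real.cos t|) volume a b :=
    Continuous.intervalIntegrable (by fun_prop) a b
  rw [intervalIntegral.integral_comp_sub_left (fun t ↦ |Real.cos t|) α,
    ← intervalIntegral.integral_add_adjacent_intervals (b := α - 2 * Real.pi + Real.pi)
      (intervalIntegrable _ _) (intervalIntegrable _ _), integral_abs_cos_add_pi,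
    show α - 0 = α - 2 * Real.pi + Real.pi + Real.pi by ring, integral_abs_cos_add_pi]
  norm_num

variable {c : ℂ} {r : ℝ}

lemma circleAverage_abs_re_div_sub {e : ℂ} (he : ‖e‖ = 1) (c : ℂ) (hr : 0 ≤ r) :
    Real.circleAverage (fun ζ ↦ |(e / (ζ - c)).re|) c r = 2 / (Real.pi * r) := by
  have re_eq (t : ℝ) : |(e / (circleMap c r t - c)).re| = r⁻¹ * |Real.cos (e.arg - t)| := by
    have : e / (circleMap c r t - c) =
        (r⁻¹ : ℝ) * Complex.exp ((e.arg - t : ℝ) * Complex.I) := by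
      conv_lhs => rw [← Complex.norm_mul_exp_arg_mul_I e, he]
      rw [circleMap_sub_center, circleMap_zero, Complex.ofReal_sub, sub_mul, Complex.exp_sub]
      push_cast
      ring
    rw [this, Complex.re_ofReal_mul, Complex.exp_ofReal_mul_I_re, abs_mul,
      abs_of_nonneg (inv_nonneg.2 hr)]
  simp only [Real.circleAverage, re_eq, intervalIntegral.integral_const_mul,
    integral_abs_cos_sub, smul_eq_mul]
  ring

lemma norm_circleAverage_le_of_norm_le {E : Type*} [NormedAddCommGroup E] [NormedSpace ℝ E]
    {F : ℂ → E} {k : ℂ → ℝ} (hk : CircleIntegrable k c r) (hF : ∀ ζ ∈ sphere c |r|, ‖F ζ‖ ≤ k ζ) :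
    ‖Real.circleAverage F c r‖ ≤ Real.circleAverage k c r := by
  rw [Real.circleAverage, Real.circleAverage, norm_smul, smul_eq_mul,
    Real.norm_of_nonneg (by positivity)]
  gcongr
  exact intervalIntegral.norm_integral_le_of_norm_le Real.two_pi_pos.le
    (Eventually.of_forall fun t _ ↦ hF _ (circleMap_mem_sphere' c r t)) hk

lemma circleAverage_inv_mul_eq_deriv {h : ℂ → ℂ} (hr : 0 < r) (hh : DiffContOnCl ℂ h (ball c r)) :
    Real.circleAverage (fun ζ ↦ (ζ - c)⁻¹ * h ζ) c r = deriv h c := by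
  rw [Real.circleAverage_eq_circleIntegral hr.ne', inv_smul_eq_iff₀ Complex.two_pi_I_ne_zero,
    ← hh.deriv_eq_smul_circleIntegral hr]
  congr 1 with ζ
  rw [one_div, pow_two, mul_inv, smul_eq_mul, smul_eq_mul, ← mul_assoc]

-- On the circle `conj (ζ - c)⁻¹ = (ζ - c) / r ^ 2`, so the conjugate part of the kernel is
-- orthogonal to holomorphic functions.
lemma circleAverage_two_mul_re_smul {h : ℂ → ℂ} (hr : 0 < r) (hh : DiffContOnCl ℂ h (ball c r))
    (e : ℂ) :
    Real.circleAverage (fun ζ ↦ (2 * (e / (ζ - c)).re) • h ζ) c r = e * deriv h c := by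
  have hcont : ContinuousOn h (sphere c r) :=
    hh.2.mono (sphere_subset_closedBall.trans_eq (closure_ball c hr.ne').symm)
  have ne_zero : ∀ ζ ∈ sphere c r, ζ - c ≠ 0 := fun ζ hζ ↦
    sub_ne_zero.2 (ne_of_mem_sphere hζ hr.ne')
  have kernel_eq {ζ : ℂ} (hζ : ζ ∈ sphere c |r|) : (2 * (e / (ζ - c)).re) • h ζ =
      e • ((ζ - c)⁻¹ * h ζ) + (conj e / r ^ 2) • ((ζ - c) * h ζ) := by
    rw [abs_of_pos hr] at hζ
    have conj_sub : conj (ζ - c) = r ^ 2 / (ζ - c) := by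
      rw [eq_div_iff (ne_zero ζ hζ), mul_comm, Complex.mul_conj', mem_sphere_iff_norm.1 hζ]
    have two_re : ((2 * (e / (ζ - c)).re : ℝ) : ℂ) =
        e / (ζ - c) + conj e / r ^ 2 * (ζ - c) := by
      rw [← Complex.add_conj, map_div₀, conj_sub, div_div_eq_mul_div]
      ring
    rw [Complex.real_smul, two_re]
    simp only [smul_eq_mul]
    ring
  have mean_value : Real.circleAverage (fun ζ ↦ (ζ - c) * h ζ) c r = 0 := by
    have : DiffContOnCl ℂ (fun ζ ↦ (ζ - c) • h ζ) (ball c |r|) := by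
      rw [abs_of_pos hr]
      exact (Differentiable.diffContOnCl (by fun_prop)).smul hh
    simpa using this.circleAverage
  rw [Real.circleAverage_congr_sphere fun ζ hζ ↦ kernel_eq hζ, Real.circleAverage_fun_add,
    Real.circleAverage_fun_smul, Real.circleAverage_fun_smul, circleAverage_inv_mul_eq_deriv hr hh,
    mean_value, smul_zero, add_zero, smul_eq_mul]
  all_goals
    refine ContinuousOn.circleIntegrable hr.le ?_
    fun_prop (disch := assumption)

lemma continuousOn_two_mul_re_div_sub (e : ℂ) (hr : 0 < r) :
    ContinuousOn (fun ζ ↦ 2 * (e / (ζ - c)).re) (sphere c r) := by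
  have ne_zero : ∀ ζ ∈ sphere c r, ζ - c ≠ 0 := fun ζ hζ ↦
    sub_ne_zero.2 (ne_of_mem_sphere hζ hr.ne')
  exact continuousOn_const.mul
    (Complex.continuous_re.comp_continuousOn (by fun_prop (disch := assumption)))

lemma circleAverage_two_mul_re_smul_add_conj {A B : ℂ → ℂ} (hr : 0 < r)
    (hA : DiffContOnCl ℂ A (ball c r)) (hB : DiffContOnCl ℂ B (ball c r)) (e : ℂ) :
    Real.circleAverage (fun ζ ↦ (2 * (e / (ζ - c)).re) • (A ζ + conj (B ζ))) c r =
      e * deriv A c + conj (e * deriv B c) := by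
  have integrable {h : ℂ → ℂ} (hh : ContinuousOn h (sphere c r)) :
      CircleIntegrable (fun ζ ↦ (2 * (e / (ζ - c)).re) • h ζ) c r :=
    ((continuousOn_two_mul_re_div_sub e hr).smul hh).circleIntegrable hr.le
  have continuousOn_sphere {h : ℂ → ℂ} (hh : DiffContOnCl ℂ h (ball c r)) :
      ContinuousOn h (sphere c r) :=
    hh.2.mono (sphere_subset_closedBall.trans_eq (closure_ball c hr.ne').symm)
  have average_conj : Real.circleAverage (fun ζ ↦ (2 * (e / (ζ - c)).re) • conj (B ζ)) c r =
      conj (e * deriv B c) := by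
    rw [← circleAverage_two_mul_re_smul hr hB e]
    convert (Complex.conjCLE : ℂ →L[ℝ] ℂ).circleAverage_comp_comm
      (integrable (continuousOn_sphere hB)) using 2
    · ext ζ
      exact ((Complex.conjCLE : ℂ →L[ℝ] ℂ).map_smul _ _).symm
    · rfl
  simp only [smul_add]
  rw [Real.circleAverage_fun_add (integrable (continuousOn_sphere hA))
    (integrable (h := fun ζ ↦ conj (B ζ))
      (Complex.continuous_conj.comp_continuousOn (continuousOn_sphere hB))),
    circleAverage_two_mul_re_smul hr hA e, average_conj]

lemma norm_deriv_add_norm_deriv_le_of_sphere {A B : ℂ → ℂ} {M : ℝ} (hr : 0 < r)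
    (hA : DiffContOnCl ℂ A (ball c r)) (hB : DiffContOnCl ℂ B (ball c r))
    (hM : ∀ ζ ∈ sphere c r, ‖A ζ + conj (B ζ)‖ ≤ M) :
    ‖deriv A c‖ + ‖deriv B c‖ ≤ 4 * M / (Real.pi * r) := by
  obtain ⟨e, norm_e, norm_eq⟩ :=
    exists_norm_eq_one_norm_mul_add_conj_mul_eq (deriv A c) (deriv B c)
  have abs_kernel (ζ : ℂ) : |2 * (e / (ζ - c)).re| = (2 : ℝ) • |(e / (ζ - c)).re| := by
    rw [abs_mul, abs_two, smul_eq_mul]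
  calc ‖deriv A c‖ + ‖deriv B c‖
    _ = ‖Real.circleAverage (fun ζ ↦ (2 * (e / (ζ - c)).re) • (A ζ + conj (B ζ))) c r‖ := by
      rw [circleAverage_two_mul_re_smul_add_conj hr hA hB, norm_eq]
    _ ≤ Real.circleAverage (fun ζ ↦ M • |2 * (e / (ζ - c)).re|) c r := by
      refine norm_circleAverage_le_of_norm_le ?_ fun ζ hζ ↦ ?_
      · exact ((continuousOn_two_mul_re_div_sub e hr).abs.const_smul M).circleIntegrable hr.le
      · rw [abs_of_pos hr] at hζ
        rw [norm_smul, mul_comm, Real.norm_eq_abs, smul_eq_mul]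
        gcongr
        exact hM ζ hζ
    _ = 4 * M / (Real.pi * r) := by
      simp only [abs_kernel]
      rw [Real.circleAverage_fun_smul, Real.circleAverage_fun_smul,
        circleAverage_abs_re_div_sub norm_e c hr.le, smul_eq_mul, smul_eq_mul]
      ring

lemma norm_deriv_add_norm_deriv_le_of_ball {A B : ℂ → ℂ} {M : ℝ} (hr : 0 < r)
    (hA : DifferentiableOn ℂ A (ball c r)) (hB : DifferentiableOn ℂ B (ball c r))
    (hM : ∀ z ∈ ball c r, ‖A z + conj (B z)‖ ≤ M) :
    ‖deriv A c‖ + ‖deriv B c‖ ≤ 4 * M / (Real.pi * r) := by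
  have bound_of_lt {s : ℝ} (hs : s ∈ Ioo 0 r) :
      ‖deriv A c‖ + ‖deriv B c‖ ≤ 4 * M / (Real.pi * s) := by
    have closedBall_subset : closedBall c s ⊆ ball c r := closedBall_subset_ball hs.2
    exact norm_deriv_add_norm_deriv_le_of_sphere hs.1
      (hA.diffContOnCl_ball closedBall_subset) (hB.diffContOnCl_ball closedBall_subset)
      fun ζ hζ ↦ hM ζ (closedBall_subset (sphere_subset_closedBall hζ))
  have tendsto_bound : Tendsto (fun s ↦ 4 * M / (Real.pi * s)) (𝓝[<] r)
      (𝓝 (4 * M / (Real.pi * r))) :=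
    ContinuousAt.continuousWithinAt (by fun_prop (disch := positivity))
  exact ge_of_tendsto tendsto_bound
    (eventually_of_mem (Ioo_mem_nhdsLT hr) fun s hs ↦ bound_of_lt hs)

end HarmonicSchwarz

section Poisson

variable {ψ : ℂ → ℂ} {z : ℂ}

lemma circleMap_zero_one (t : ℝ) : circleMap 0 1 t = Complex.exp (Complex.I * t) := by
  rw [circleMap_zero, Complex.ofReal_one, one_mul, mul_comm]

lemma circleIntegrable_zero_one_iff :
    CircleIntegrable ψ 0 1 ↔
      IntervalIntegrable (fun t : ℝ ↦ ψ (Complex.exp (Complex.I * t))) volume 0 (2 * Real.pi) := by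
  simp only [CircleIntegrable, circleMap_zero_one]

lemma poissonIntegral_eq_circleAverage (ψ : ℂ → ℂ) (z : ℂ) :
    poissonIntegral ψ z = Real.circleAverage (fun ζ ↦ poissonKernel 0 z ζ • ψ ζ) 0 1 := by
  have kernel_eq (t : ℝ) : poissonKernel 0 z (Complex.exp (Complex.I * t)) =
      (1 - ‖z‖ ^ 2) / ‖1 - z * Complex.exp (-(Complex.I * t))‖ ^ 2 := by
    have factor : Complex.exp (Complex.I * t) - z =
        Complex.exp (Complex.I * t) * (1 - z * Complex.exp (-(Complex.I * t))) := by
      rw [mul_sub, mul_left_comm, ← Complex.exp_add, add_neg_cancel, Complex.exp_zero, mul_one,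
        mul_one]
    rw [poissonKernel_def, sub_zero, sub_zero, factor, norm_mul, Complex.norm_exp_I_mul_ofReal,
      one_pow, one_mul]
  simp only [poissonIntegral, Real.circleAverage, one_div, circleMap_zero_one, kernel_eq,
    Complex.real_smul]

lemma poissonKernel_nonneg (hz : z ∈ ball (0 : ℂ) 1) {ζ : ℂ} (hζ : ζ ∈ sphere (0 : ℂ) 1) :
    0 ≤ poissonKernel 0 z ζ := by
  rw [poissonKernel_def, sub_zero, sub_zero, mem_sphere_zero_iff_norm.1 hζ]
  have : ‖z‖ ^ 2 ≤ 1 ^ 2 := by gcongr; exact (mem_ball_zero_iff.1 hz).le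
  exact div_nonneg (by linarith) (by positivity)

lemma circleIntegrable_poissonKernel (hz : z ∈ ball (0 : ℂ) 1) :
    CircleIntegrable (poissonKernel 0 z) 0 1 := by
  rw [poissonKernel_eq_re_herglotzRieszKernel]
  have := continuousOn_herglotzRieszKernel_sphere hz
  rw [abs_one] at this
  exact (Complex.continuous_re.comp_continuousOn this).circleIntegrable zero_le_one

lemma circleAverage_poissonKernel (hz : z ∈ ball (0 : ℂ) 1) :
    Real.circleAverage (poissonKernel 0 z) 0 1 = 1 := by
  have poisson_one := DiffContOnCl.circleAverage_poissonKernel_smul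
    (diffContOnCl_const (𝕜 := ℂ) (c := (1 : ℂ))) hz
  have average_ofReal :=
    Complex.ofRealCLM.circleAverage_comp_comm (circleIntegrable_poissonKernel hz)
  rw [← Complex.ofReal_inj, Complex.ofReal_one, ← poisson_one, ← Complex.ofRealCLM_apply,
    ← average_ofReal]
  refine congrArg (Real.circleAverage · 0 1) (funext fun ζ ↦ ?_)
  simp

lemma norm_poissonIntegral_le {C : ℝ} (hψ : ∀ ζ ∈ sphere (0 : ℂ) 1, ‖ψ ζ‖ ≤ C)
    (hz : z ∈ ball (0 : ℂ) 1) : ‖poissonIntegral ψ z‖ ≤ C := by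
  calc ‖poissonIntegral ψ z‖
    _ ≤ Real.circleAverage (fun ζ ↦ C • poissonKernel 0 z ζ) 0 1 := by
      rw [poissonIntegral_eq_circleAverage]
      refine norm_circleAverage_le_of_norm_le ?_ fun ζ hζ ↦ ?_
      · exact (circleIntegrable_poissonKernel hz).const_smul
      · rw [abs_one] at hζ
        have kernel_nonneg := poissonKernel_nonneg hz hζ
        rw [norm_smul, Real.norm_of_nonneg kernel_nonneg, mul_comm, smul_eq_mul]
        gcongr
        exact hψ ζ hζ
    _ = C := by
      rw [Real.circleAverage_fun_smul, circleAverage_poissonKernel hz, smul_eq_mul, mul_one]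

/-- The Herglotz integral of `ψ` over the unit circle, half of which is the holomorphic part of
the Poisson integral of `ψ`. -/
def herglotzIntegral (ψ : ℂ → ℂ) (z : ℂ) : ℂ :=
  Real.circleAverage (fun ζ ↦ herglotzRieszKernel 0 z ζ • ψ ζ) 0 1

lemma differentiableOn_herglotzIntegral (hψ : CircleIntegrable ψ 0 1) :
    DifferentiableOn ℂ (herglotzIntegral ψ) (ball 0 1) :=
  differentiableOn_circleAverage_herglotzRieszKernel_smul hψ

lemma circleIntegrable_conj (hψ : CircleIntegrable ψ 0 1) :
    CircleIntegrable (fun ζ ↦ conj (ψ ζ)) 0 1 := by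
  rw [CircleIntegrable, intervalIntegrable_iff] at hψ ⊢
  exact (Complex.conjCLE : ℂ →L[ℝ] ℂ).integrable_comp hψ

lemma poissonIntegral_eq_herglotzIntegral_add_conj (hψ : CircleIntegrable ψ 0 1)
    (hz : z ∈ ball (0 : ℂ) 1) :
    poissonIntegral ψ z =
      herglotzIntegral ψ z / 2 + conj (herglotzIntegral (fun ζ ↦ conj (ψ ζ)) z / 2) := by
  have integrable {φ : ℂ → ℂ} (hφ : CircleIntegrable φ 0 1) :
      CircleIntegrable (fun ζ ↦ herglotzRieszKernel 0 z ζ • φ ζ) 0 1 :=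
    hφ.continuousOn_smul (continuousOn_herglotzRieszKernel_sphere hz)
  have conj_herglotz : conj (herglotzIntegral (fun ζ ↦ conj (ψ ζ)) z) =
      Real.circleAverage (fun ζ ↦ conj (herglotzRieszKernel 0 z ζ) • ψ ζ) 0 1 := by
    refine ((Complex.conjCLE : ℂ →L[ℝ] ℂ).circleAverage_comp_comm
      (integrable (circleIntegrable_conj hψ))).symm.trans ?_
    refine congrArg (Real.circleAverage · 0 1) (funext fun ζ ↦ ?_)
    simp
  have integrable_conj :
      CircleIntegrable (fun ζ ↦ conj (herglotzRieszKernel 0 z ζ) • ψ ζ) 0 1 :=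
    hψ.continuousOn_smul
      (Complex.continuous_conj.comp_continuousOn (continuousOn_herglotzRieszKernel_sphere hz))
  have kernel_eq (ζ : ℂ) : poissonKernel 0 z ζ • ψ ζ = (2 : ℂ)⁻¹ •
      (herglotzRieszKernel 0 z ζ • ψ ζ + conj (herglotzRieszKernel 0 z ζ) • ψ ζ) := by
    rw [poissonKernel_eq_re_herglotzRieszKernel, Function.comp_apply, Complex.real_smul,
      Complex.re_eq_add_conj, ← add_smul, smul_smul, smul_eq_mul, div_eq_inv_mul]
  simp only [poissonIntegral_eq_circleAverage, kernel_eq]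
  rw [Real.circleAverage_fun_smul, Real.circleAverage_fun_add (integrable hψ) integrable_conj,
    ← conj_herglotz, map_div₀, Complex.conj_ofNat, ← add_div, div_eq_inv_mul, smul_eq_mul]
  rfl

lemma exists_hasFDerivAt_poissonIntegral {M : ℝ} (hψ : CircleIntegrable ψ 0 1)
    (hM : ∀ z ∈ ball (0 : ℂ) 1, ‖poissonIntegral ψ z‖ ≤ M) :
    ∃ a b : ℂ, HasFDerivAt (poissonIntegral ψ) (wirtingerMap a b) 0 ∧
      ‖a‖ + ‖b‖ ≤ 4 / Real.pi * M := by
  set A : ℂ → ℂ := fun z ↦ herglotzIntegral ψ z / 2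
  set B : ℂ → ℂ := fun z ↦ herglotzIntegral (fun ζ ↦ conj (ψ ζ)) z / 2
  have hA : DifferentiableOn ℂ A (ball 0 1) := (differentiableOn_herglotzIntegral hψ).div_const 2
  have hB : DifferentiableOn ℂ B (ball 0 1) :=
    (differentiableOn_herglotzIntegral (circleIntegrable_conj hψ)).div_const 2
  have poisson_eq : ∀ z ∈ ball (0 : ℂ) 1, poissonIntegral ψ z = A z + conj (B z) := fun z hz ↦
    poissonIntegral_eq_herglotzIntegral_add_conj hψ hz
  have ball_mem : ball (0 : ℂ) 1 ∈ 𝓝 0 := ball_mem_nhds 0 one_pos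
  refine ⟨deriv A 0, conj (deriv B 0), ?_, ?_⟩
  · have := hasFDerivAt_add_conj (hA.hasDerivAt ball_mem) (hB.hasDerivAt ball_mem)
    exact this.congr_of_eventuallyEq (eventually_of_mem ball_mem poisson_eq)
  · have := norm_deriv_add_norm_deriv_le_of_ball one_pos hA hB
      fun z hz ↦ poisson_eq z hz ▸ hM z hz
    rwa [RCLike.norm_conj, div_mul_eq_mul_div, ← mul_one Real.pi]

end Poisson

section LogEstimates

variable {u : ℂ} {p : ℝ}

lemma abs_log_le_add_inv {x : ℝ} (hx : 0 ≤ x) : |Real.log x| ≤ x + x⁻¹ := by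
  have := Real.log_le_self hx
  have log_inv_le := Real.log_le_self (inv_nonneg.2 hx)
  have := inv_nonneg.2 hx
  rw [Real.log_inv] at log_inv_le
  rw [abs_le]
  constructor <;> linarith

lemma abs_log_norm_one_sub_add_re_le_sq (hu : ‖u‖ ≤ 1 / 2) :
    |Real.log ‖1 - u‖ + u.re| ≤ ‖u‖ ^ 2 := by
  have hlt : ‖-u‖ < 1 := by rw [norm_neg]; linarith
  have inv_le : (1 - ‖u‖)⁻¹ ≤ 2 := inv_le_of_inv_le₀ two_pos (by linarith)
  calc |Real.log ‖1 - u‖ + u.re|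
    _ = |(Complex.log (1 + -u) - -u).re| := by
      rw [Complex.sub_re, Complex.log_re, Complex.neg_re, sub_neg_eq_add, ← sub_eq_add_neg]
    _ ≤ ‖Complex.log (1 + -u) - -u‖ := Complex.abs_re_le_norm _
    _ ≤ ‖u‖ ^ 2 * (1 - ‖u‖)⁻¹ / 2 := by
      simpa only [norm_neg] using Complex.norm_log_one_add_sub_self_le hlt
    _ ≤ ‖u‖ ^ 2 * 2 / 2 := by gcongr
    _ = ‖u‖ ^ 2 := by ring

lemma two_mul_rpow_le {x : ℝ} (hx : 0 ≤ x) (hp : p ≤ 2) : (2 * x) ^ p ≤ 4 * x ^ p := by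
  rw [Real.mul_rpow two_pos.le hx]
  gcongr
  calc (2 : ℝ) ^ p
    _ ≤ 2 ^ (2 : ℝ) := Real.rpow_le_rpow_of_exponent_le one_le_two hp
    _ = 4 := by norm_num

-- At `u = 1` both `log 0` and `u / (1 - u)` take the junk value `0`.
lemma abs_log_norm_one_sub_add_re_le_rpow (hp₁ : 1 ≤ p) (hp₂ : p ≤ 2) (u : ℂ) :
    |Real.log ‖1 - u‖ + u.re| ≤ 4 * (‖u‖ ^ p + ‖u / (1 - u)‖ ^ p) := by
  rcases le_total ‖u‖ (1 / 2) with hu | hu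
  · have : ‖u‖ ^ (2 : ℝ) ≤ ‖u‖ ^ p :=
      Real.rpow_le_rpow_of_exponent_ge' (norm_nonneg u) (by linarith) (by linarith) hp₂
    have : 0 ≤ ‖u‖ ^ p := by positivity
    have : 0 ≤ ‖u / (1 - u)‖ ^ p := by positivity
    have := abs_log_norm_one_sub_add_re_le_sq hu
    rw [← Real.rpow_two] at this
    linarith
  have norm_le : 2 * ‖u‖ ≤ 4 * ‖u‖ ^ p :=
    (Real.self_le_rpow_of_one_le (by linarith) hp₁).trans (two_mul_rpow_le (norm_nonneg u) hp₂)
  have log_le : Real.log ‖1 - u‖ ≤ ‖u‖ := by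
    rcases (norm_nonneg (1 - u)).eq_or_lt with h_zero | h_pos
    · rw [← h_zero, Real.log_zero]
      exact norm_nonneg u
    · have := Real.log_le_sub_one_of_pos h_pos
      have := norm_sub_le 1 u
      rw [norm_one] at this
      linarith
  have neg_log_le : -Real.log ‖1 - u‖ ≤ 4 * ‖u / (1 - u)‖ ^ p := by
    calc -Real.log ‖1 - u‖
      _ = Real.log ‖1 - u‖⁻¹ := (Real.log_inv _).symm
      _ ≤ (‖1 - u‖⁻¹) ^ p / p := Real.log_le_rpow_div (by positivity) (by linarith)
      _ ≤ (‖1 - u‖⁻¹) ^ p := div_le_self (by positivity) hp₁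
      _ ≤ (2 * ‖u / (1 - u)‖) ^ p := by
        gcongr
        rw [norm_div, div_eq_mul_inv, ← mul_assoc]
        exact le_mul_of_one_le_left (by positivity) (by linarith)
      _ ≤ 4 * ‖u / (1 - u)‖ ^ p := two_mul_rpow_le (norm_nonneg _) hp₂
  have := abs_le.1 (Complex.abs_re_le_norm u)
  have : 0 ≤ ‖u / (1 - u)‖ ^ p := by positivity
  rw [abs_le]
  constructor <;> linarith

end LogEstimates

section Green

variable {p : ℝ} {z w : ℂ}

/-- The Green function `log |(1 - z w̄) / (z - w)|` of the unit disk. -/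
def diskGreen (z w : ℂ) : ℝ := Real.log ‖(1 - z * conj w) / (z - w)‖

/-- Twice the Wirtinger derivative `∂G/∂z (0, w)` of the Green function of the unit disk. -/
def diskGreenGradient (w : ℂ) : ℂ := w⁻¹ - conj w

lemma one_sub_norm_le_norm_one_sub_mul_conj (z : ℂ) (hw : ‖w‖ ≤ 1) :
    1 - ‖z‖ ≤ ‖1 - z * conj w‖ := by
  have norm_le : ‖z * conj w‖ ≤ ‖z‖ := by
    rw [norm_mul, RCLike.norm_conj]
    exact mul_le_of_le_one_right (norm_nonneg z) hw
  have := norm_sub_norm_le 1 (z * conj w)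
  rw [norm_one] at this
  linarith

lemma diskGreen_sub_diskGreen_zero (hz : ‖z‖ < 1) (hw : ‖w‖ ≤ 1) (hw₀ : w ≠ 0) (hzw : z ≠ w) :
    diskGreen z w - diskGreen 0 w =
      Real.log ‖1 - z * conj w‖ - Real.log ‖1 - z / w‖ := by
  have numerator_ne : ‖1 - z * conj w‖ ≠ 0 := by
    linarith [one_sub_norm_le_norm_one_sub_mul_conj z hw] |> ne_of_gt
  have denominator_ne : ‖1 - z / w‖ ≠ 0 :=
    norm_ne_zero_iff.2 (sub_ne_zero.2 fun h ↦ hzw ((div_eq_one_iff_eq hw₀).1 h.symm))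
  have factor : z - w = -w * (1 - z / w) := by field_simp; ring
  rw [diskGreen, diskGreen, factor, zero_mul, sub_zero, zero_sub, norm_div, norm_div, norm_mul,
    norm_neg, norm_one, Real.log_div numerator_ne (by positivity),
    Real.log_mul (by positivity) denominator_ne, Real.log_div one_ne_zero (by positivity),
    Real.log_one]
  ring

lemma abs_diskGreen_sub_sub_re_le (hp₁ : 1 ≤ p) (hp₂ : p ≤ 2) (hz : ‖z‖ ≤ 1 / 2) (hw : ‖w‖ ≤ 1)
    (hw₀ : w ≠ 0) (hzw : z ≠ w) :
    |diskGreen z w - diskGreen 0 w - (z * diskGreenGradient w).re| ≤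
      5 * ‖z‖ ^ p * (‖w‖ ^ (-p) + ‖w - z‖ ^ (-p)) := by
  have numerator_le : |Real.log ‖1 - z * conj w‖ + (z * conj w).re| ≤ ‖z‖ ^ p := by
    have norm_le : ‖z * conj w‖ ≤ ‖z‖ := by
      rw [norm_mul, RCLike.norm_conj]
      exact mul_le_of_le_one_right (norm_nonneg z) hw
    calc |Real.log ‖1 - z * conj w‖ + (z * conj w).re|
      _ ≤ ‖z * conj w‖ ^ 2 := abs_log_norm_one_sub_add_re_le_sq (norm_le.trans hz)
      _ ≤ ‖z‖ ^ 2 := by gcongr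
      _ = ‖z‖ ^ (2 : ℝ) := (Real.rpow_two _).symm
      _ ≤ ‖z‖ ^ p :=
        Real.rpow_le_rpow_of_exponent_ge' (norm_nonneg z) (by linarith) (by linarith) hp₂
  have denominator_le : |Real.log ‖1 - z / w‖ + (z / w).re| ≤
      4 * (‖z‖ ^ p * ‖w‖ ^ (-p) + ‖z‖ ^ p * ‖w - z‖ ^ (-p)) := by
    have factor : z / w / (1 - z / w) = z / (w - z) := by
      rw [div_div, mul_sub, mul_one, mul_div_cancel₀ z hw₀]
    have div_rpow (v : ℂ) : ‖z / v‖ ^ p = ‖z‖ ^ p * ‖v‖ ^ (-p) := by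
      rw [norm_div, Real.div_rpow (norm_nonneg z) (norm_nonneg v),
        Real.rpow_neg (norm_nonneg v), div_eq_mul_inv]
    rw [← div_rpow, ← div_rpow, ← factor]
    exact abs_log_norm_one_sub_add_re_le_rpow hp₁ hp₂ (z / w)
  have one_le : 1 ≤ ‖w‖ ^ (-p) :=
    Real.one_le_rpow_of_pos_of_le_one_of_nonpos (norm_pos_iff.2 hw₀) hw (by linarith)
  have : ‖z‖ ^ p ≤ ‖z‖ ^ p * ‖w‖ ^ (-p) := le_mul_of_one_le_right (by positivity) one_le
  have : 0 ≤ ‖z‖ ^ p * ‖w - z‖ ^ (-p) := by positivity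
  have re_eq : (z * diskGreenGradient w).re = (z / w).re - (z * conj w).re := by
    rw [diskGreenGradient, mul_sub, Complex.sub_re, div_eq_mul_inv]
  rw [diskGreen_sub_diskGreen_zero (by linarith) hw hw₀ hzw, re_eq]
  rw [abs_le] at *
  constructor <;> linarith

lemma abs_diskGreen_le (hz : ‖z‖ < 1) (hw : ‖w‖ ≤ 1) :
    |diskGreen z w| ≤ 2 * ‖w - z‖ ^ (-1 : ℝ) + 2 * (1 - ‖z‖)⁻¹ := by
  have : 0 < 1 - ‖z‖ := sub_pos.2 hz
  have norm_ge := one_sub_norm_le_norm_one_sub_mul_conj z hw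
  have norm_mul_le : ‖z * conj w‖ ≤ 1 := by
    rw [norm_mul, RCLike.norm_conj]
    exact mul_le_one₀ hz.le (norm_nonneg w) hw
  have norm_le : ‖1 - z * conj w‖ ≤ 2 := (norm_sub_le _ _).trans (by rw [norm_one]; linarith)
  have dist_le : ‖w - z‖ ≤ 2 := (norm_sub_le _ _).trans (by linarith)
  rw [diskGreen, norm_div, norm_sub_rev z w, Real.rpow_neg_one]
  calc |Real.log (‖1 - z * conj w‖ / ‖w - z‖)|
    _ ≤ ‖1 - z * conj w‖ / ‖w - z‖ + (‖1 - z * conj w‖ / ‖w - z‖)⁻¹ :=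
      abs_log_le_add_inv (by positivity)
    _ = ‖1 - z * conj w‖ * ‖w - z‖⁻¹ + ‖w - z‖ * ‖1 - z * conj w‖⁻¹ := by
      rw [inv_div, div_eq_mul_inv, div_eq_mul_inv]
    _ ≤ 2 * ‖w - z‖⁻¹ + 2 * (1 - ‖z‖)⁻¹ := by gcongr

lemma norm_diskGreenGradient (hw : ‖w‖ ≤ 1) : ‖diskGreenGradient w‖ = ‖w‖⁻¹ - ‖w‖ := by
  rcases eq_or_ne w 0 with rfl | hw₀
  · simp [diskGreenGradient]
  have factor : diskGreenGradient w = w⁻¹ * ((1 - ‖w‖ ^ 2 : ℝ) : ℂ) := by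
    rw [diskGreenGradient, Complex.ofReal_sub, Complex.ofReal_pow, ← Complex.mul_conj']
    field_simp
    simp
  have one_sub_nonneg : 0 ≤ 1 - ‖w‖ ^ 2 := sub_nonneg.2 (pow_le_one₀ (norm_nonneg w) hw)
  have : ‖w‖ ≠ 0 := norm_ne_zero_iff.2 hw₀
  rw [factor, norm_mul, norm_inv, Complex.norm_of_nonneg one_sub_nonneg]
  field_simp

end Green

section RadialIntegrals

variable {p : ℝ} {z : ℂ}

lemma integrableOn_ball_norm_rpow_neg (hp : p < 2) (r : ℝ) :
    IntegrableOn (fun w : ℂ ↦ ‖w‖ ^ (-p)) (ball 0 r) := by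
  have finrank_eq : (Module.finrank ℝ ℂ : ℝ) = 2 := by
    rw [Complex.finrank_real_complex, Nat.cast_ofNat]
  have norm_le (w : ℂ) : ‖‖w‖ ^ (-p)‖ ≤ 1 * ‖w‖ ^ (-p) := by
    rw [Real.norm_of_nonneg (by positivity), one_mul]
  exact integrableOn_ball_of_norm_le_rpow Module.finrank_pos (finrank_eq ▸ hp)
    (Eventually.of_forall norm_le) (Measurable.aestronglyMeasurable (by fun_prop))

lemma preimage_sub_const_ball (z : ℂ) (r : ℝ) : (· - z) ⁻¹' ball 0 r = ball z r := by
  ext w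
  rw [mem_preimage, mem_ball_zero_iff, mem_ball_iff_norm]

lemma integrableOn_norm_sub_rpow_neg (hp : p < 2) (z : ℂ) (r : ℝ) :
    IntegrableOn (fun w ↦ ‖w - z‖ ^ (-p)) (ball z r) := by
  have h := ((measurePreserving_sub_right volume z).integrableOn_comp_preimage
    (measurableEmbedding_subRight z)).2 (integrableOn_ball_norm_rpow_neg hp r)
  rwa [preimage_sub_const_ball] at h

lemma setIntegral_norm_sub_rpow_neg (p : ℝ) (z : ℂ) (r : ℝ) :
    ∫ w in ball z r, ‖w - z‖ ^ (-p) = ∫ w in ball (0 : ℂ) r, ‖w‖ ^ (-p) := by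
  have h := (measurePreserving_sub_right volume z).setIntegral_preimage_emb
    (measurableEmbedding_subRight z) (fun w ↦ ‖w‖ ^ (-p)) (ball 0 r)
  rwa [preimage_sub_const_ball] at h

lemma ball_zero_one_subset_ball (hz : ‖z‖ ≤ 1) : ball (0 : ℂ) 1 ⊆ ball z 2 :=
  ball_subset_ball' (by rw [dist_zero_left]; linarith)

lemma setIntegral_norm_sub_rpow_neg_le (hp : p < 2) (hz : ‖z‖ ≤ 1) :
    ∫ w in ball (0 : ℂ) 1, ‖w - z‖ ^ (-p) ≤ ∫ w in ball (0 : ℂ) 2, ‖w‖ ^ (-p) := by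
  rw [← setIntegral_norm_sub_rpow_neg p z]
  exact setIntegral_mono_set (integrableOn_norm_sub_rpow_neg hp z 2)
    (Eventually.of_forall fun w ↦ by positivity) (ball_zero_one_subset_ball hz).eventuallyLE

lemma setIntegral_ball_fun_norm (φ : ℝ → ℝ) {R : ℝ} (hR : 0 ≤ R) :
    ∫ w in ball (0 : ℂ) R, φ ‖w‖ = 2 * Real.pi * ∫ r in (0 : ℝ)..R, r * φ r := by
  have volume_eq : volume.real (ball (0 : ℂ) 1) = Real.pi := by
    simp [Measure.real, Complex.volume_ball]
  calc ∫ w in ball (0 : ℂ) R, φ ‖w‖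
    _ = ∫ w : ℂ, (Iio R).indicator φ ‖w‖ := by
      rw [← integral_indicator measurableSet_ball]
      simp only [indicator, mem_ball_zero_iff, mem_Iio]
    _ = 2 * Real.pi * ∫ r in Ioi 0, r * (Iio R).indicator φ r := by
      rw [integral_fun_norm_addHaar volume ((Iio R).indicator φ), volume_eq,
        Complex.finrank_real_complex]
      simp only [nsmul_eq_mul, smul_eq_mul, Nat.cast_ofNat, Nat.add_one_sub_one, pow_one,
        mul_assoc]
    _ = 2 * Real.pi * ∫ r in Ioo 0 R, r * φ r := by
      simp only [← indicator_mul_right (Iio R) (fun r : ℝ ↦ r)]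
      rw [setIntegral_indicator measurableSet_Iio, Ioi_inter_Iio]
    _ = 2 * Real.pi * ∫ r in (0 : ℝ)..R, r * φ r := by
      rw [intervalIntegral.integral_of_le hR, integral_Ioc_eq_integral_Ioo]

end RadialIntegrals

section GreenIntegrals

variable {z : ℂ}

lemma measurable_diskGreen (z : ℂ) : Measurable (diskGreen z) := by
  unfold diskGreen
  fun_prop

lemma measurable_diskGreenGradient : Measurable diskGreenGradient := by
  unfold diskGreenGradient
  fun_prop

lemma integrableOn_diskGreen (hz : ‖z‖ < 1) : IntegrableOn (diskGreen z) (ball 0 1) := by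
  have dominating_integrable :
      IntegrableOn (fun w ↦ 2 * ‖w - z‖ ^ (-1 : ℝ) + 2 * (1 - ‖z‖)⁻¹) (ball 0 1) := by
    refine Integrable.add (Integrable.const_mul ?_ 2) (integrableOn_const measure_ball_lt_top.ne)
    exact (integrableOn_norm_sub_rpow_neg one_lt_two z 2).mono_set
      (ball_zero_one_subset_ball hz.le)
  refine dominating_integrable.mono' ?_ (ae_restrict_of_forall_mem measurableSet_ball ?_)
  · exact (measurable_diskGreen z).aestronglyMeasurable
  · exact fun w hw ↦ abs_diskGreen_le hz (mem_ball_zero_iff.1 hw).le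

lemma integrableOn_diskGreenGradient : IntegrableOn diskGreenGradient (ball 0 1) := by
  refine (integrableOn_ball_norm_rpow_neg one_lt_two 1).mono' ?_
    (ae_restrict_of_forall_mem measurableSet_ball fun w hw ↦ ?_)
  · exact measurable_diskGreenGradient.aestronglyMeasurable
  · rw [norm_diskGreenGradient (mem_ball_zero_iff.1 hw).le, Real.rpow_neg_one]
    linarith [norm_nonneg w]

lemma integral_norm_diskGreenGradient :
    ∫ w in ball (0 : ℂ) 1, ‖diskGreenGradient w‖ = 4 * Real.pi / 3 := by
  have radial_integral : ∫ r in (0 : ℝ)..1, r * (r⁻¹ - r) = 2 / 3 := by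
    have integrand_eq : EqOn (fun r : ℝ ↦ r * (r⁻¹ - r)) (fun r ↦ 1 - r ^ 2) (Ioc 0 1) := by
      intro r hr
      have := hr.1.ne'
      field_simp
    rw [intervalIntegral.integral_of_le zero_le_one,
      setIntegral_congr_fun measurableSet_Ioc integrand_eq,
      ← intervalIntegral.integral_of_le zero_le_one]
    norm_num [integral_pow]
  calc ∫ w in ball (0 : ℂ) 1, ‖diskGreenGradient w‖
    _ = ∫ w in ball (0 : ℂ) 1, (‖w‖⁻¹ - ‖w‖) :=
      setIntegral_congr_fun measurableSet_ball fun w hw ↦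
        norm_diskGreenGradient (mem_ball_zero_iff.1 hw).le
    _ = 2 * Real.pi * ∫ r in (0 : ℝ)..1, r * (r⁻¹ - r) :=
      setIntegral_ball_fun_norm (fun r ↦ r⁻¹ - r) zero_le_one
    _ = 4 * Real.pi / 3 := by rw [radial_integral]; ring

end GreenIntegrals

lemma hasFDerivAt_of_norm_add_sub_sub_le_rpow {E F : Type*} [NormedAddCommGroup E]
    [NormedSpace ℝ E] [NormedAddCommGroup F] [NormedSpace ℝ F] {φ : E → F} {L : E →L[ℝ] F}
    {x : E} {p C δ : ℝ} (hp : 1 < p) (hδ : 0 < δ)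
    (h : ∀ z, ‖z‖ ≤ δ → ‖φ (x + z) - φ x - L z‖ ≤ C * ‖z‖ ^ p) : HasFDerivAt φ L x := by
  have remainder_isBigO : (fun z ↦ φ (x + z) - φ x - L z) =O[𝓝 0] fun z ↦ ‖z‖ ^ p := by
    refine .of_bound C ?_
    filter_upwards [closedBall_mem_nhds 0 hδ] with z hz
    rw [Real.norm_of_nonneg (by positivity)]
    exact h z (mem_closedBall_zero_iff.1 hz)
  have rpow_isLittleO : (fun z : E ↦ ‖z‖ ^ p) =o[𝓝 0] fun z ↦ z := by
    have factor (z : E) : ‖z‖ ^ p = ‖z‖ ^ (p - 1) * ‖z‖ := by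
      rw [← Real.rpow_add_one' (norm_nonneg z) (by linarith), sub_add_cancel]
    have tendsto_zero : Tendsto (fun z : E ↦ ‖z‖ ^ (p - 1)) (𝓝 0) (𝓝 0) := by
      simpa [Real.zero_rpow (sub_pos.2 hp).ne'] using
        ((continuous_norm (E := E)).rpow_const fun _ ↦ .inr (sub_pos.2 hp).le).tendsto 0
    simp only [factor]
    refine Asymptotics.IsLittleO.of_norm_right ?_
    simpa only [one_mul] using ((Asymptotics.isLittleO_one_iff ℝ).2 tendsto_zero).mul_isBigO
      (Asymptotics.isBigO_refl (fun z : E ↦ ‖z‖) _)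
  exact hasFDerivAt_iff_isLittleO_nhds_zero.2 (remainder_isBigO.trans_isLittleO rpow_isLittleO)

lemma norm_integral_mul_le_of_norm_le {α : Type*} [MeasurableSpace α] {μ : Measure α}
    {k g : α → ℂ} {M : ℝ} (hk : Integrable k μ) (hg : ∀ᵐ x ∂μ, ‖g x‖ ≤ M) :
    ‖∫ x, k x * g x ∂μ‖ ≤ (∫ x, ‖k x‖ ∂μ) * M := by
  rw [← integral_mul_const]
  refine norm_integral_le_of_norm_le (hk.norm.mul_const M) (hg.mono fun x hx ↦ ?_)
  rw [norm_mul]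
  gcongr

section GreenPotential

variable {g : ℂ → ℂ} {M : ℝ} {z : ℂ}

lemma greenPotential_eq_integral_diskGreen (g : ℂ → ℂ) (z : ℂ) :
    greenPotential g z =
      (1 / (2 * Real.pi) : ℝ) • ∫ w in ball (0 : ℂ) 1, (diskGreen z w : ℂ) * g w :=
  rfl

/-- The differential at the origin of the Green potential of `g`, obtained by differentiating
under the integral sign. -/
def greenPotentialFDeriv (g : ℂ → ℂ) : ℂ →L[ℝ] ℂ :=
  wirtingerMap ((1 / (4 * Real.pi) : ℝ) • ∫ w in ball (0 : ℂ) 1, diskGreenGradient w * g w)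
    ((1 / (4 * Real.pi) : ℝ) • ∫ w in ball (0 : ℂ) 1, conj (diskGreenGradient w) * g w)

lemma integrableOn_conj_diskGreenGradient :
    IntegrableOn (fun w ↦ conj (diskGreenGradient w)) (ball 0 1) :=
  Complex.conjCLE.toContinuousLinearMap.integrable_comp integrableOn_diskGreenGradient

lemma greenPotentialFDeriv_apply (hg : AEStronglyMeasurable g (volume.restrict (ball 0 1)))
    (hM : ∀ w ∈ ball 0 1, ‖g w‖ ≤ M) (z : ℂ) :
    greenPotentialFDeriv g z = (1 / (2 * Real.pi) : ℝ) •
      ∫ w in ball (0 : ℂ) 1, ((z * diskGreenGradient w).re : ℂ) * g w := by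
  have g_le : ∀ᵐ w ∂volume.restrict (ball 0 1), ‖g w‖ ≤ M :=
    ae_restrict_of_forall_mem measurableSet_ball hM
  have integrand_eq (w : ℂ) : ((z * diskGreenGradient w).re : ℂ) * g w =
      z / 2 * (diskGreenGradient w * g w) +
        conj z / 2 * (conj (diskGreenGradient w) * g w) := by
    rw [Complex.re_eq_add_conj, map_mul]
    ring
  simp only [integrand_eq]
  rw [greenPotentialFDeriv, wirtingerMap_apply,
    integral_add ((integrableOn_diskGreenGradient.mul_bdd hg g_le).const_mul _)
      ((integrableOn_conj_diskGreenGradient.mul_bdd hg g_le).const_mul _),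
    integral_const_mul, integral_const_mul]
  simp only [Complex.real_smul]
  push_cast
  ring

lemma integrableOn_re_mul_diskGreenGradient (z : ℂ) :
    IntegrableOn (fun w ↦ (z * diskGreenGradient w).re) (ball 0 1) :=
  (integrableOn_diskGreenGradient.const_mul z).re

lemma setIntegral_abs_diskGreen_sub_sub_re_le {p : ℝ} (hp₁ : 1 ≤ p) (hp₂ : p < 2)
    (hz : ‖z‖ ≤ 1 / 2) :
    ∫ w in ball (0 : ℂ) 1, |diskGreen z w - diskGreen 0 w - (z * diskGreenGradient w).re| ≤
      10 * (∫ w in ball (0 : ℂ) 2, ‖w‖ ^ (-p)) * ‖z‖ ^ p := by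
  have hz₁ : ‖z‖ ≤ 1 := by linarith
  have integrable_norm := integrableOn_ball_norm_rpow_neg hp₂ 1
  have integrable_norm_sub :=
    (integrableOn_norm_sub_rpow_neg hp₂ z 2).mono_set (ball_zero_one_subset_ball hz₁)
  have pointwise : ∀ᵐ w ∂volume.restrict (ball 0 1),
      |diskGreen z w - diskGreen 0 w - (z * diskGreenGradient w).re| ≤
        5 * ‖z‖ ^ p * (‖w‖ ^ (-p) + ‖w - z‖ ^ (-p)) := by
    filter_upwards [ae_restrict_mem measurableSet_ball, Measure.ae_ne _ 0, Measure.ae_ne _ z]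
      with w hw hw₀ hzw
    exact abs_diskGreen_sub_sub_re_le hp₁ hp₂.le hz (mem_ball_zero_iff.1 hw).le hw₀ hzw.symm
  calc ∫ w in ball (0 : ℂ) 1, |diskGreen z w - diskGreen 0 w - (z * diskGreenGradient w).re|
    _ ≤ ∫ w in ball (0 : ℂ) 1, 5 * ‖z‖ ^ p * (‖w‖ ^ (-p) + ‖w - z‖ ^ (-p)) :=
      integral_mono_of_nonneg (Eventually.of_forall fun w ↦ abs_nonneg _)
        ((integrable_norm.add integrable_norm_sub).const_mul _) pointwise
    _ = 5 * ‖z‖ ^ p * ((∫ w in ball (0 : ℂ) 1, ‖w‖ ^ (-p)) +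
          ∫ w in ball (0 : ℂ) 1, ‖w - z‖ ^ (-p)) := by
      rw [integral_const_mul, integral_add integrable_norm integrable_norm_sub]
    _ ≤ 5 * ‖z‖ ^ p * ((∫ w in ball (0 : ℂ) 2, ‖w‖ ^ (-p)) +
          ∫ w in ball (0 : ℂ) 2, ‖w‖ ^ (-p)) := by
      have norm_zero_le : ‖(0 : ℂ)‖ ≤ 1 := norm_zero.trans_le zero_le_one
      have norm_le := setIntegral_norm_sub_rpow_neg_le hp₂ norm_zero_le
      simp only [sub_zero] at norm_le
      gcongr ?_ * (?_ + ?_)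
      exact setIntegral_norm_sub_rpow_neg_le hp₂ hz₁
    _ = 10 * (∫ w in ball (0 : ℂ) 2, ‖w‖ ^ (-p)) * ‖z‖ ^ p := by ring

lemma greenPotential_sub_sub_eq (hg : AEStronglyMeasurable g (volume.restrict (ball 0 1)))
    (hM : ∀ w ∈ ball 0 1, ‖g w‖ ≤ M) (hz : ‖z‖ < 1) :
    greenPotential g z - greenPotential g 0 - greenPotentialFDeriv g z =
      (1 / (2 * Real.pi) : ℝ) • ∫ w in ball (0 : ℂ) 1,
        ((diskGreen z w - diskGreen 0 w - (z * diskGreenGradient w).re : ℝ) : ℂ) * g w := by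
  have integrable_mul {k : ℂ → ℝ} (hk : IntegrableOn k (ball 0 1)) :
      IntegrableOn (fun w ↦ (k w : ℂ) * g w) (ball 0 1) :=
    Integrable.mul_bdd (f := fun w ↦ (k w : ℂ)) hk.ofReal hg
      (ae_restrict_of_forall_mem measurableSet_ball hM)
  have integrable_green := integrable_mul (integrableOn_diskGreen hz)
  have integrable_green_zero := integrable_mul (integrableOn_diskGreen (norm_zero.trans_lt one_pos))
  have integrable_re := integrable_mul (integrableOn_re_mul_diskGreenGradient z)
  simp only [greenPotential_eq_integral_diskGreen]
  rw [greenPotentialFDeriv_apply hg hM, ← smul_sub, ← smul_sub,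
    ← integral_sub integrable_green integrable_green_zero,
    ← integral_sub (integrable_green.fun_sub integrable_green_zero) integrable_re]
  simp only [Complex.ofReal_sub, sub_mul]

lemma norm_greenPotential_sub_sub_le (hg : AEStronglyMeasurable g (volume.restrict (ball 0 1)))
    (hM : ∀ w ∈ ball 0 1, ‖g w‖ ≤ M) {p : ℝ} (hp₁ : 1 ≤ p) (hp₂ : p < 2) (hz : ‖z‖ ≤ 1 / 2) :
    ‖greenPotential g z - greenPotential g 0 - greenPotentialFDeriv g z‖ ≤
      5 * M / Real.pi * (∫ w in ball (0 : ℂ) 2, ‖w‖ ^ (-p)) * ‖z‖ ^ p := by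
  have hz₁ : ‖z‖ < 1 := by linarith
  have M_nonneg : 0 ≤ M := (norm_nonneg (g 0)).trans (hM 0 (mem_ball_self one_pos))
  have remainder_integrable := (((integrableOn_diskGreen hz₁).sub
    (integrableOn_diskGreen (norm_zero.trans_lt one_pos))).sub
      (integrableOn_re_mul_diskGreenGradient z)).ofReal (𝕜 := ℂ)
  have norm_integral_le := norm_integral_mul_le_of_norm_le remainder_integrable
    (ae_restrict_of_forall_mem measurableSet_ball hM)
  simp only [Pi.sub_apply, RCLike.norm_ofReal] at norm_integral_le
  rw [greenPotential_sub_sub_eq hg hM hz₁, norm_smul, Real.norm_of_nonneg (by positivity)]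
  calc 1 / (2 * Real.pi) * ‖∫ w in ball (0 : ℂ) 1,
        ((diskGreen z w - diskGreen 0 w - (z * diskGreenGradient w).re : ℝ) : ℂ) * g w‖
    _ ≤ 1 / (2 * Real.pi) * ((∫ w in ball (0 : ℂ) 1,
        |diskGreen z w - diskGreen 0 w - (z * diskGreenGradient w).re|) * M) := by
      gcongr
      exact norm_integral_le
    _ ≤ 1 / (2 * Real.pi) * (10 * (∫ w in ball (0 : ℂ) 2, ‖w‖ ^ (-p)) * ‖z‖ ^ p * M) := by
      gcongr
      exact setIntegral_abs_diskGreen_sub_sub_re_le hp₁ hp₂ hz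
    _ = 5 * M / Real.pi * (∫ w in ball (0 : ℂ) 2, ‖w‖ ^ (-p)) * ‖z‖ ^ p := by
      field_simp
      ring

lemma hasFDerivAt_greenPotential (hg : AEStronglyMeasurable g (volume.restrict (ball 0 1)))
    (hM : ∀ w ∈ ball 0 1, ‖g w‖ ≤ M) :
    HasFDerivAt (greenPotential g) (greenPotentialFDeriv g) 0 :=
  hasFDerivAt_of_norm_add_sub_sub_le_rpow (p := 3 / 2) (by norm_num) one_half_pos fun z hz ↦ by
    rw [zero_add]
    exact norm_greenPotential_sub_sub_le hg hM (by norm_num) (by norm_num) hz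

lemma norm_greenPotentialFDeriv_coeff_le {k : ℂ → ℂ} (hk : IntegrableOn k (ball 0 1))
    (k_norm : ∀ w, ‖k w‖ = ‖diskGreenGradient w‖) (hM : ∀ w ∈ ball 0 1, ‖g w‖ ≤ M) :
    ‖(1 / (4 * Real.pi) : ℝ) • ∫ w in ball (0 : ℂ) 1, k w * g w‖ ≤ 1 / 3 * M := by
  have norm_integral_le := norm_integral_mul_le_of_norm_le hk
    (ae_restrict_of_forall_mem measurableSet_ball hM)
  simp only [k_norm, integral_norm_diskGreenGradient] at norm_integral_le
  rw [norm_smul, Real.norm_of_nonneg (by positivity)]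
  calc 1 / (4 * Real.pi) * ‖∫ w in ball (0 : ℂ) 1, k w * g w‖
    _ ≤ 1 / (4 * Real.pi) * (4 * Real.pi / 3 * M) := by gcongr
    _ = 1 / 3 * M := by field_simp

lemma exists_hasFDerivAt_greenPotential
    (hg : AEStronglyMeasurable g (volume.restrict (ball 0 1)))
    (hM : ∀ w ∈ ball 0 1, ‖g w‖ ≤ M) :
    ∃ a b, HasFDerivAt (greenPotential g) (wirtingerMap a b) 0 ∧ ‖a‖ + ‖b‖ ≤ 2 / 3 * M := by
  have norm_a_le := norm_greenPotentialFDeriv_coeff_le integrableOn_diskGreenGradient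
    (fun _ ↦ rfl) hM
  have norm_b_le := norm_greenPotentialFDeriv_coeff_le integrableOn_conj_diskGreenGradient
    (fun w ↦ RCLike.norm_conj _) hM
  exact ⟨_, _, hasFDerivAt_greenPotential hg hM, by linarith⟩

end GreenPotential

section Supremum

variable {g : ℂ → ℂ}

lemma norm_le_supD (hg : BddAbove ((fun z ↦ ‖g z‖) '' ball 0 1)) {z : ℂ} (hz : z ∈ ball 0 1) :
    ‖g z‖ ≤ supD g :=
  le_csSup hg (mem_image_of_mem _ hz)

lemma bddAbove_norm_image_ball (hg : ContinuousOn g (closedBall 0 1)) :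
    BddAbove ((fun z ↦ ‖g z‖) '' ball 0 1) :=
  ((isCompact_closedBall 0 1).bddAbove_image hg.norm).mono (image_mono ball_subset_closedBall)

lemma bddAbove_norm_poissonIntegral_image_ball {ψ : ℂ → ℂ} {C : ℝ}
    (hψ : ∀ ζ ∈ sphere (0 : ℂ) 1, ‖ψ ζ‖ ≤ C) :
    BddAbove ((fun z ↦ ‖poissonIntegral ψ z‖) '' ball 0 1) :=
  ⟨C, forall_mem_image.2 fun _ hz ↦ norm_poissonIntegral_le hψ hz⟩

end Supremum

theorem stmt4_general (g ψ f : ℂ → ℂ)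
    (hg : AEStronglyMeasurable g (volume.restrict (ball 0 1)))
    (hg_bdd : BddAbove ((fun z ↦ ‖g z‖) '' ball 0 1))
    (hψ : CircleIntegrable ψ 0 1)
    (hP_bdd : BddAbove ((fun z ↦ ‖poissonIntegral ψ z‖) '' ball 0 1))
    (hf : ∀ᶠ z in 𝓝 0, f z = poissonIntegral ψ z - greenPotential g z) :
    DifferentiableAt ℝ f 0 ∧
      ‖wdz f 0‖ + ‖wdzbar f 0‖ ≤
        4 / Real.pi * supD (poissonIntegral ψ) + 2 / 3 * supD g := by
  obtain ⟨a, b, hasFDerivAt_P, norm_P_le⟩ :=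
    exists_hasFDerivAt_poissonIntegral hψ fun z hz ↦ norm_le_supD hP_bdd hz
  obtain ⟨a', b', hasFDerivAt_G, norm_G_le⟩ :=
    exists_hasFDerivAt_greenPotential hg fun z hz ↦ norm_le_supD hg_bdd hz
  have hasFDerivAt_f : HasFDerivAt f (wirtingerMap (a - a') (b - b')) 0 := by
    rw [← wirtingerMap_sub]
    exact (hasFDerivAt_P.sub hasFDerivAt_G).congr_of_eventuallyEq hf
  refine ⟨hasFDerivAt_f.differentiableAt, ?_⟩
  rw [wdz_eq_of_hasFDerivAt hasFDerivAt_f, wdzbar_eq_of_hasFDerivAt hasFDerivAt_f]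
  linarith [norm_sub_le a a', norm_sub_le b b']

/-- Schwarz–Pick type estimate at the origin for solutions of the Poisson equation. -/
theorem stmt4 (g ψ f : ℂ → ℂ)
    (hg : ContinuousOn g (closedBall (0:ℂ) 1))
    (hψint : IntervalIntegrable (fun t : ℝ => ψ (Complex.exp (Complex.I * (t : ℂ))))
      MeasureTheory.volume 0 (2 * Real.pi))
    (hψbdd : ∃ C : ℝ, ∀ ζ ∈ sphere (0:ℂ) 1, ‖ψ ζ‖ ≤ C)
    (hf : ∀ z ∈ ball (0:ℂ) 1, f z = poissonIntegral ψ z - greenPotential g z) :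
    ‖wdz f 0‖ + ‖wdzbar f 0‖ ≤
      4 / Real.pi * supD (poissonIntegral ψ) + 2 / 3 * supD g :=
  (stmt4_general g ψ f
    ((hg.mono ball_subset_closedBall).aestronglyMeasurable measurableSet_ball)
    (bddAbove_norm_image_ball hg) (circleIntegrable_zero_one_iff.2 hψint)
    (hψbdd.elim fun _ ↦ bddAbove_norm_poissonIntegral_image_ball)
    (eventually_of_mem (ball_mem_nhds 0 one_pos) hf)).2
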